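/- arXiv:0902.1587 — 8 statements merged into one kernel-verified Lean document; each statement's English description precedes it below -/
import Mathlib

section
/- If (X,≤) is a well quasi-ordered set, then every downward-closed subset of X is a finite union of ideals of X. -/
/-!
Over a well quasi-order the lower sets, ordered by inclusion, are well-founded, so every lower set
is a finite union of sup-irreducible ones. A sup-irreducible lower set `L` is an ideal: if
`x, y ∈ L` had no upper bound in `L`, then `L` would be the union of its two proper lower subsets
`{z ∈ L | ¬ x ≤ z}` and `{z ∈ L | ¬ y ≤ z}`.
-/

/-- An ideal of a quasi-ordered set: nonempty, downward closed, and directed. -/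
def IsIdeal {X : Type*} [Preorder X] (S : Set X) : Prop :=
  S.Nonempty ∧ IsLowerSet S ∧ DirectedOn (· ≤ ·) S

/-- A quasi-ordering is a well quasi-ordering iff every infinite sequence contains an
infinite ascending subsequence. -/
def IsWqo (X : Type*) [Preorder X] : Prop :=
  ∀ f : ℕ → X, ∃ g : ℕ → ℕ, StrictMono g ∧ ∀ m n : ℕ, m ≤ n → f (g m) ≤ f (g n)

theorem IsWqo.wellQuasiOrderedLE {X : Type*} [Preorder X] (h : IsWqo X) :
    WellQuasiOrderedLE X where
  wqo f := by
    obtain ⟨g, hg, hfg⟩ := h f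
    exact ⟨g 0, g 1, hg Nat.zero_lt_one, hfg 0 1 (Nat.zero_le 1)⟩

theorem coe_lowerSet_finset_sup {ι X : Type*} [LE X] (s : Finset ι) (f : ι → LowerSet X) :
    ((s.sup f : LowerSet X) : Set X) = ⋃ i ∈ s, (f i : Set X) := by
  rw [Finset.sup_eq_iSup, LowerSet.coe_iSup₂]

section

variable {X : Type*} [Preorder X]

instance wellFoundedLT_lowerSet [WellQuasiOrderedLE X] : WellFoundedLT (LowerSet X) where
  wf := by
    rw [wellFounded_iff_isEmpty_descending_chain]
    refine ⟨fun ⟨L, hL⟩ ↦ ?_⟩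
    choose x hx_mem hx_notMem using fun n ↦
      Set.exists_of_ssubset (LowerSet.coe_ssubset_coe.2 (hL n))
    obtain ⟨m, n, hmn, hx_le⟩ := wellQuasiOrdered_le x
    have hL_le : L n ≤ L (m + 1) := (strictAnti_nat_of_succ_lt hL).antitone hmn
    exact hx_notMem m (hL_le ((L n).lower hx_le (hx_mem n)))

theorem directedOn_of_supIrred {L : LowerSet X} (hL : SupIrred L) :
    DirectedOn (· ≤ ·) (L : Set X) := by
  intro x hx y hy
  have hne : L.erase x ⊔ L.erase y ≠ L := fun h ↦
    (hL.2 h).elim (LowerSet.erase_lt.2 hx).ne (LowerSet.erase_lt.2 hy).ne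
  have hlt : L.erase x ⊔ L.erase y < L :=
    (sup_le LowerSet.erase_le LowerSet.erase_le).lt_of_ne hne
  obtain ⟨z, hz, hz_notMem⟩ := Set.exists_of_ssubset (LowerSet.coe_ssubset_coe.2 hlt)
  rw [SetLike.mem_coe, LowerSet.mem_sup_iff, not_or] at hz_notMem
  have hxz : x ≤ z := of_not_not fun h ↦ hz_notMem.1 ⟨hz, h⟩
  have hyz : y ≤ z := of_not_not fun h ↦ hz_notMem.2 ⟨hz, h⟩
  exact ⟨z, hz, hxz, hyz⟩

theorem isIdeal_of_supIrred {L : LowerSet X} (hL : SupIrred L) : IsIdeal (L : Set X) :=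
  ⟨LowerSet.coe_nonempty.2 hL.ne_bot, L.lower, directedOn_of_supIrred hL⟩

end

/-- If `(X, ≤)` is a well quasi-ordered set, then every downward-closed subset of `X` is a
finite union of ideals of `X`. -/
theorem stmt1 {X : Type*} [Preorder X] (hwqo : IsWqo X)
    (D : Set X) (hD : IsLowerSet D) :
    ∃ 𝒥 : Finset (Set X), (∀ I ∈ 𝒥, IsIdeal I) ∧ D = ⋃ I ∈ 𝒥, I := by
  classical
  have := hwqo.wellQuasiOrderedLE
  obtain ⟨s, hs_sup, hs_irred⟩ := exists_supIrred_decomposition (⟨D, hD⟩ : LowerSet X)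
  refine ⟨s.image (↑), Finset.forall_mem_image.2 fun L hL ↦ isIdeal_of_supIrred (hs_irred hL), ?_⟩
  calc
    D = ((s.sup id : LowerSet X) : Set X) := congrArg SetLike.coe hs_sup.symm
    _ = ⋃ L ∈ s, (L : Set X) := coe_lowerSet_finset_sup s id
    _ = ⋃ I ∈ s.image (↑), I := (Finset.set_biUnion_finset_image (g := id)).symm
end

section
/- Let (X,≤) be a quasi-ordered set and let Y be a collection of downward-closed subsets of X such that every downward-closed subset of X is the union of finitely many members of Y. Then every ideal of X belongs to Y. (Hence the set of ideals of X is the least possible such family: any weak adequate domain of limits on X must contain, up to the coding map, every ideal of X.) -/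
/-!
Directed sets are prime among finite unions of lower sets: if `D` were contained in neither `s`
nor `t`, an upper bound in `D` of a point outside `s` and a point outside `t` would avoid both.
An ideal is therefore equal to one of the lower sets in any finite family whose union it is.
-/

section LE

variable {α : Type*} [LE α] {D s t : Set α}

theorem subset_or_subset_of_directedOn (hD : DirectedOn (· ≤ ·) D) (hs : IsLowerSet s)
    (ht : IsLowerSet t) (h : D ⊆ s ∪ t) : D ⊆ s ∨ D ⊆ t := by
  by_contra! hst
  obtain ⟨x, hxD, hxs⟩ := Set.not_subset.1 hst.1
  obtain ⟨y, hyD, hyt⟩ := Set.not_subset.1 hst.2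
  obtain ⟨z, hzD, hxz, hyz⟩ := hD x hxD y hyD
  exact (h hzD).elim (fun hzs ↦ hxs (hs hxz hzs)) (fun hzt ↦ hyt (ht hyz hzt))

theorem exists_subset_of_directedOn_of_subset_sUnion (hD : DirectedOn (· ≤ ·) D)
    (hne : D.Nonempty) {F : Set (Set α)} (hF : F.Finite) (hlower : ∀ s ∈ F, IsLowerSet s)
    (h : D ⊆ ⋃₀ F) : ∃ s ∈ F, D ⊆ s := by
  induction F, hF using Set.Finite.induction_on with
  | empty => exact absurd (Set.sUnion_empty ▸ h) hne.not_subset_empty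
  | @insert s F _ _ ih =>
    rw [Set.forall_mem_insert] at hlower
    rw [Set.sUnion_insert] at h
    rw [Set.exists_mem_insert]
    exact (subset_or_subset_of_directedOn hD hlower.1 (isLowerSet_sUnion hlower.2) h).imp_right
      (ih hlower.2)

theorem sUnion_mem_of_directedOn {F : Set (Set α)} (hF : F.Finite)
    (hlower : ∀ s ∈ F, IsLowerSet s) (hne : (⋃₀ F).Nonempty)
    (hD : DirectedOn (· ≤ ·) (⋃₀ F)) : ⋃₀ F ∈ F := by
  obtain ⟨s, hsF, hs⟩ :=
    exists_subset_of_directedOn_of_subset_sUnion hD hne hF hlower Set.Subset.rfl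
  rwa [hs.antisymm (Set.subset_sUnion_of_mem hsF)]

end LE

/-- Let `Y` be a collection of downward-closed subsets of a quasi-ordered set `X` such that
every downward-closed subset of `X` is the union of finitely many members of `Y`.  Then every
ideal of `X` belongs to `Y`.  (Hence the set of ideals is the least such family, and any weak
adequate domain of limits on `X` must contain, up to the coding map `γ`, every ideal of `X`.) -/
theorem stmt2 {X : Type*} [Preorder X] (Y : Set (Set X))
    (hY : ∀ S ∈ Y, IsLowerSet S)
    (hcover : ∀ D : Set X, IsLowerSet D →
      ∃ E : Finset (Set X), ↑E ⊆ Y ∧ D = ⋃ S ∈ E, S) :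
    ∀ I : Set X, IsIdeal I → I ∈ Y := by
  rintro I ⟨hne, hlower, hdir⟩
  obtain ⟨E, hEY, hIE⟩ := hcover I hlower
  have hI : I = ⋃₀ E := by rw [hIE, Set.sUnion_eq_biUnion]; rfl
  subst hI
  exact hEY (sUnion_mem_of_directedOn E.finite_toSet (fun S hS ↦ hY S (hEY hS)) hne hdir)
end

section
/- Let Y be a continuous poset. Then for every downward-closed subset A of Y, the closure of A in the Scott topology equals LUB_Y(A), the set of all elements of Y that are least upper bounds of directed subsets of A; moreover this set is also the smallest subset of Y containing A and closed under least upper bounds of directed families that exist in Y (the inductive hull of A). -/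
/-- `x` is way below `y`: for every (nonempty) directed family with a least upper bound
`z ≥ y`, some member of the family is above `x`. -/
def WayBelow {Y : Type*} [Preorder Y] (x y : Y) : Prop :=
  ∀ d : Set Y, d.Nonempty → DirectedOn (· ≤ ·) d → ∀ z : Y, IsLUB d z → y ≤ z →
    ∃ w ∈ d, x ≤ w

/-- A poset is continuous iff for every `y` the set of elements way below `y` is
(nonempty and) directed and has `y` as its least upper bound. -/
def ContinuousPoset (Y : Type*) [PartialOrder Y] : Prop :=
  ∀ y : Y, {x | WayBelow x y}.Nonempty ∧ DirectedOn (· ≤ ·) {x | WayBelow x y} ∧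
    IsLUB {x | WayBelow x y} y

/-- Scott opens: upward-closed sets such that every (nonempty) directed family whose least
upper bound lies in the set already meets the set. -/
def ScottOpen {Y : Type*} [Preorder Y] (U : Set Y) : Prop :=
  IsUpperSet U ∧ ∀ d : Set Y, d.Nonempty → DirectedOn (· ≤ ·) d → ∀ z : Y, IsLUB d z →
    z ∈ U → (d ∩ U).Nonempty

/-- The Scott topology. -/
def scottTop (Y : Type*) [Preorder Y] : TopologicalSpace Y where
  IsOpen := ScottOpen
  isOpen_univ := by
    refine ⟨isUpperSet_univ, fun d hd _ z _ _ => ?_⟩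
    simpa using hd
  isOpen_inter := by
    rintro U V ⟨hU, hU'⟩ ⟨hV, hV'⟩
    refine ⟨hU.inter hV, fun d hd hdir z hz hzUV => ?_⟩
    obtain ⟨x, hxd, hxU⟩ := hU' d hd hdir z hz hzUV.1
    obtain ⟨y, hyd, hyV⟩ := hV' d hd hdir z hz hzUV.2
    obtain ⟨w, hwd, hxw, hyw⟩ := hdir x hxd y hyd
    exact ⟨w, hwd, hU hxw hxU, hV hyw hyV⟩
  isOpen_sUnion := by
    intro S hS
    refine ⟨isUpperSet_sUnion fun U hU => (hS U hU).1, fun d hd hdir z hz hzS => ?_⟩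
    obtain ⟨U, hUS, hzU⟩ := hzS
    obtain ⟨x, hxd, hxU⟩ := (hS U hUS).2 d hd hdir z hz hzU
    exact ⟨x, hxd, U, hUS, hxU⟩

/-- `LUBset Y A`: the set of elements of `Y` that are least upper bounds of (nonempty)
directed subsets of `A`. -/
def LUBset {Y : Type*} [Preorder Y] (A : Set Y) : Set Y :=
  {y | ∃ d ⊆ A, d.Nonempty ∧ DirectedOn (· ≤ ·) d ∧ IsLUB d y}

/-!
Let `A` be a lower set of a continuous poset. A point `y` is a directed supremum of elements of
`A` iff every `x ≪ y` lies in `A`; hence `LUBset A` is a lower set. If `z` is the supremum of a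
directed subset `d` of `LUBset A`, then the elements way below some member of `d` form a directed
subset of `A` whose supremum is again `z`, so `z` is already in `LUBset A`. Being Scott closed
means being a lower set closed under directed suprema, so `LUBset A` is Scott closed, and every
Scott closed set containing `A` contains `LUBset A`.
-/

open Set Topology

section Preorder

variable {Y : Type*} [Preorder Y] {A S : Set Y} {x y z : Y}

theorem WayBelow.trans_le (hxy : WayBelow x y) (hyz : y ≤ z) : WayBelow x z :=
  fun d hd hdir w hw hzw => hxy d hd hdir w hw (hyz.trans hzw)

theorem monotone_setOf_wayBelow : Monotone fun y : Y => {x | WayBelow x y} :=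
  fun _ _ hyz _ hxy => hxy.trans_le hyz

theorem isClosed_scottTop_iff : IsClosed[scottTop Y] S ↔ IsLowerSet S ∧ DirSupClosed S := by
  rw [← @isOpen_compl_iff, ← isUpperSet_compl, ← dirSupInacc_compl]
  rfl

theorem subset_LUBset : A ⊆ LUBset A := fun a ha =>
  ⟨{a}, singleton_subset_iff.2 ha, singleton_nonempty a, directedOn_singleton a, isLUB_singleton⟩

theorem LUBset_subset_of_dirSupClosed (hAS : A ⊆ S) (hS : DirSupClosed S) : LUBset A ⊆ S :=
  fun _ ⟨_, hdA, hd, hdir, hy⟩ => hS (hdA.trans hAS) hd hdir hy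

theorem LUBset_subset_closure_scottTop : LUBset A ⊆ closure[scottTop Y] A :=
  LUBset_subset_of_dirSupClosed (@subset_closure _ (scottTop Y) _)
    (isClosed_scottTop_iff.1 (@isClosed_closure _ (scottTop Y) _)).2

theorem WayBelow.mem_of_mem_LUBset (hxy : WayBelow x y) (hA : IsLowerSet A)
    (hy : y ∈ LUBset A) : x ∈ A := by
  obtain ⟨d, hdA, hd, hdir, hdy⟩ := hy
  obtain ⟨w, hwd, hxw⟩ := hxy d hd hdir y hdy le_rfl
  exact hA hxw (hdA hwd)

end Preorder

namespace ContinuousPoset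

variable {Y : Type*} [PartialOrder Y] {A d : Set Y} {y z : Y}

theorem mem_LUBset_iff (hY : ContinuousPoset Y) (hA : IsLowerSet A) :
    y ∈ LUBset A ↔ ∀ x, WayBelow x y → x ∈ A :=
  ⟨fun hy _ hxy => hxy.mem_of_mem_LUBset hA hy, fun h => ⟨{x | WayBelow x y}, h, hY y⟩⟩

theorem isLowerSet_LUBset (hY : ContinuousPoset Y) (hA : IsLowerSet A) :
    IsLowerSet (LUBset A) := fun _ _ hyz hz =>
  (hY.mem_LUBset_iff hA).2 fun _ hxy => (hxy.trans_le hyz).mem_of_mem_LUBset hA hz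

theorem nonempty_biUnion_wayBelow (hY : ContinuousPoset Y) (hd : d.Nonempty) :
    (⋃ v ∈ d, {x | WayBelow x v}).Nonempty :=
  nonempty_biUnion.2 (hd.imp fun v hv => ⟨hv, (hY v).1⟩)

theorem directedOn_biUnion_wayBelow (hY : ContinuousPoset Y) (hd : DirectedOn (· ≤ ·) d) :
    DirectedOn (· ≤ ·) (⋃ v ∈ d, {x | WayBelow x v}) := by
  rw [biUnion_eq_iUnion]
  have hmono : Directed (· ⊆ ·) fun v : d => {x | WayBelow x (v : Y)} :=
    hd.directed_val.mono_comp (g := fun y => {x | WayBelow x y}) _ monotone_setOf_wayBelow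
  exact directedOn_iUnion hmono fun v => (hY v).2.1

theorem isLUB_biUnion_wayBelow_iff (hY : ContinuousPoset Y) :
    IsLUB (⋃ v ∈ d, {x | WayBelow x v}) z ↔ IsLUB d z := by
  rw [biUnion_eq_iUnion, ← isLUB_iUnion_iff_of_isLUB fun v : d => (hY v).2.2, Subtype.range_coe]

theorem dirSupClosed_LUBset (hY : ContinuousPoset Y) (hA : IsLowerSet A) :
    DirSupClosed (LUBset A) := fun d hdA hd hdir _ hz =>
  ⟨⋃ v ∈ d, {x | WayBelow x v},
    iUnion₂_subset fun _ hv _ hxv => hxv.mem_of_mem_LUBset hA (hdA hv),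
    hY.nonempty_biUnion_wayBelow hd, hY.directedOn_biUnion_wayBelow hdir,
    hY.isLUB_biUnion_wayBelow_iff.2 hz⟩

theorem closure_scottTop_eq_LUBset (hY : ContinuousPoset Y) (hA : IsLowerSet A) :
    closure[scottTop Y] A = LUBset A :=
  have hclosed : IsClosed[scottTop Y] (LUBset A) :=
    isClosed_scottTop_iff.2 ⟨hY.isLowerSet_LUBset hA, hY.dirSupClosed_LUBset hA⟩
  (@closure_minimal _ (scottTop Y) _ _ subset_LUBset hclosed).antisymm
    LUBset_subset_closure_scottTop

end ContinuousPoset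

/-- In a continuous poset `Y`, for every downward-closed subset `A`, the Scott closure of `A`
equals `LUBset A`, and this set is moreover the smallest subset of `Y` containing `A` and
closed under least upper bounds of directed families existing in `Y` (the inductive hull). -/
theorem stmt3 {Y : Type*} [PartialOrder Y] (hY : ContinuousPoset Y)
    (A : Set Y) (hA : IsLowerSet A) :
    @closure Y (scottTop Y) A = LUBset A ∧
    A ⊆ LUBset A ∧
    (∀ d ⊆ LUBset A, d.Nonempty → DirectedOn (· ≤ ·) d → ∀ z : Y, IsLUB d z →
      z ∈ LUBset A) ∧
    (∀ S : Set Y, A ⊆ S →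
      (∀ d ⊆ S, d.Nonempty → DirectedOn (· ≤ ·) d → ∀ z : Y, IsLUB d z → z ∈ S) →
      LUBset A ⊆ S) := by
  refine ⟨hY.closure_scottTop_eq_LUBset hA, subset_LUBset, ?_, ?_⟩
  · exact fun d hdA hd hdir z hz => hY.dirSupClosed_LUBset hA hdA hd hdir hz
  · exact fun S hAS hS =>
      LUBset_subset_of_dirSupClosed hAS fun d hdS hd hdir z hz => hS d hdS hd hdir z hz
end

section
/- Let Y be a continuous dcpo having a basis B that is well-founded under the order of Y. Then Y is algebraic: its set K of compact elements (elements y with y ≪ y) is a basis, and Y is order-isomorphic to the ideal completion Idl(K) of K (the poset of ideals of K ordered by inclusion) via y ↦ {x ∈ K | x ≤ y}. Moreover, if B is well quasi-ordered (Y is well-based), then K is well quasi-ordered. -/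
/-- `Y` is a dcpo: every (nonempty) directed family has a least upper bound. -/
def IsDcpo (Y : Type*) [PartialOrder Y] : Prop :=
  ∀ d : Set Y, d.Nonempty → DirectedOn (· ≤ ·) d → ∃ z : Y, IsLUB d z

/-- `B` is a basis of `Y`: every `y ∈ Y` is the least upper bound of a (nonempty) directed
family of elements of `B` way below `y`. -/
def IsBasis {Y : Type*} [PartialOrder Y] (B : Set Y) : Prop :=
  ∀ y : Y, ∃ d ⊆ B, d.Nonempty ∧ DirectedOn (· ≤ ·) d ∧ (∀ x ∈ d, WayBelow x y) ∧ IsLUB d y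

/-- `S` is an ideal of the sub-quasi-ordered set `K` of `Y`: a subset of `K` that is nonempty,
downward closed in `K`, and directed. -/
def IsIdealOn {Y : Type*} [Preorder Y] (K S : Set Y) : Prop :=
  S ⊆ K ∧ S.Nonempty ∧ (∀ x ∈ K, ∀ y ∈ S, x ≤ y → x ∈ S) ∧ DirectedOn (· ≤ ·) S

/-- `B` is well quasi-ordered: every infinite sequence in `B` contains an infinite ascending
subsequence. -/
def WqoOn {Y : Type*} [Preorder Y] (B : Set Y) : Prop :=
  ∀ f : ℕ → Y, (∀ n, f n ∈ B) →
    ∃ g : ℕ → ℕ, StrictMono g ∧ ∀ m n : ℕ, m ≤ n → f (g m) ≤ f (g n)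

/-!
Compact elements arise from interpolation: given `x ≪ y`, take an element `b` of `B` minimal with
`x ≪ b ≪ y`. Interpolating once more gives `a ∈ B` with `x ≪ a ≪ b`, and minimality forces `a = b`,
so `b ≪ b`. Thus a compact element lies between `x` and `y`, which makes the compact elements a
basis: each `y` is the directed supremum of the compact elements below it, and an ideal of compact
elements is recovered from its supremum by compactness. Finally `K ⊆ B`, because a compact `k` lies
below some `b ∈ B` with `b ≪ k`, so a well quasi-ordering of `B` restricts to `K`.
-/

section Preorder

variable {Y : Type*} [Preorder Y] {a b x y : Y}

theorem WayBelow.le (h : WayBelow x y) : x ≤ y := by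
  obtain ⟨w, rfl, hxw⟩ :=
    h {y} (Set.singleton_nonempty y) (directedOn_singleton y) y isLUB_singleton le_rfl
  exact hxw

theorem WayBelow.mono (h : WayBelow x y) (hax : a ≤ x) (hyb : y ≤ b) : WayBelow a b := by
  intro d hne hd z hz hbz
  obtain ⟨w, hw, hxw⟩ := h d hne hd z hz (hyb.trans hbz)
  exact ⟨w, hw, hax.trans hxw⟩

theorem WayBelow.trans_le_s4 (h : WayBelow x y) (hyb : y ≤ b) : WayBelow x b :=
  h.mono le_rfl hyb

theorem WqoOn.subset {A B : Set Y} (hB : WqoOn B) (hAB : A ⊆ B) : WqoOn A :=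
  fun f hf => hB f fun n => hAB (hf n)

/-- The set `K` of compact elements of `Y`. -/
def compactElements (Y : Type*) [Preorder Y] : Set Y :=
  {y | WayBelow y y}

/-- The set `{x ∈ K | x ≤ y}` of compact elements below `y`, the image of `y` in the ideal
completion `Idl(K)`. -/
def compactsBelow (y : Y) : Set Y :=
  {x | WayBelow x x ∧ x ≤ y}

theorem compactsBelow_eq_setOf_wayBelow (y : Y) :
    compactsBelow y = {x ∈ compactElements Y | WayBelow x y} :=
  Set.ext fun _ => and_congr_right fun hx => ⟨hx.trans_le_s4, WayBelow.le⟩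

theorem IsIdealOn.compactsBelow_eq_of_isLUB {S : Set Y} (hS : IsIdealOn (compactElements Y) S)
    (hy : IsLUB S y) : compactsBelow y = S := by
  obtain ⟨hSK, hne, hlower, hdir⟩ := hS
  refine Set.Subset.antisymm ?_ fun x hx => ⟨hSK hx, hy.1 hx⟩
  rintro x ⟨hx, hxy⟩
  obtain ⟨w, hw, hxw⟩ := hx S hne hdir y hy hxy
  exact hlower x hx w hw hxw

end Preorder

namespace IsBasis

variable {Y : Type*} [PartialOrder Y] {B : Set Y} {x y : Y}

theorem nonempty_wayBelow (hB : IsBasis B) (y : Y) : {b ∈ B | WayBelow b y}.Nonempty := by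
  obtain ⟨d, hdB, ⟨b, hb⟩, -, hdy, -⟩ := hB y
  exact ⟨b, hdB hb, hdy b hb⟩

theorem exists_ge_ge_wayBelow (hB : IsBasis B) {x₁ x₂ : Y} (h₁ : WayBelow x₁ y)
    (h₂ : WayBelow x₂ y) : ∃ b ∈ B, x₁ ≤ b ∧ x₂ ≤ b ∧ WayBelow b y := by
  obtain ⟨d, hdB, hne, hdir, hdy, hlub⟩ := hB y
  obtain ⟨w₁, hw₁, hxw₁⟩ := h₁ d hne hdir y hlub le_rfl
  obtain ⟨w₂, hw₂, hxw₂⟩ := h₂ d hne hdir y hlub le_rfl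
  obtain ⟨w, hw, hw₁w, hw₂w⟩ := hdir w₁ hw₁ w₂ hw₂
  exact ⟨w, hdB hw, hxw₁.trans hw₁w, hxw₂.trans hw₂w, hdy w hw⟩

theorem directedOn_wayBelow (hB : IsBasis B) (y : Y) :
    DirectedOn (· ≤ ·) {b ∈ B | WayBelow b y} := by
  rintro b₁ ⟨-, h₁⟩ b₂ ⟨-, h₂⟩
  obtain ⟨b, hb, hb₁, hb₂, hby⟩ := hB.exists_ge_ge_wayBelow h₁ h₂
  exact ⟨b, ⟨hb, hby⟩, hb₁, hb₂⟩

theorem isLUB_wayBelow (hB : IsBasis B) (y : Y) : IsLUB {b ∈ B | WayBelow b y} y := by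
  obtain ⟨d, hdB, -, -, hdy, hlub⟩ := hB y
  exact ⟨fun b hb => hb.2.le, fun u hu => hlub.2 fun b hb => hu ⟨hdB hb, hdy b hb⟩⟩

theorem exists_wayBelow_wayBelow (hB : IsBasis B) (h : WayBelow x y) :
    ∃ b ∈ B, WayBelow x b ∧ WayBelow b y := by
  let D : Set Y := {a | ∃ b ∈ B, WayBelow a b ∧ WayBelow b y}
  have hne : D.Nonempty := by
    obtain ⟨b, hb, hby⟩ := hB.nonempty_wayBelow y
    obtain ⟨a, -, hab⟩ := hB.nonempty_wayBelow b
    exact ⟨a, b, hb, hab, hby⟩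
  have hdir : DirectedOn (· ≤ ·) D := by
    rintro a₁ ⟨b₁, -, hab₁, hby₁⟩ a₂ ⟨b₂, -, hab₂, hby₂⟩
    obtain ⟨b, hb, hb₁, hb₂, hby⟩ := hB.exists_ge_ge_wayBelow hby₁ hby₂
    obtain ⟨a, -, ha₁, ha₂, hab⟩ :=
      hB.exists_ge_ge_wayBelow (hab₁.trans_le_s4 hb₁) (hab₂.trans_le_s4 hb₂)
    exact ⟨a, ⟨b, hb, hab, hby⟩, ha₁, ha₂⟩
  have hlub : IsLUB D y := by
    refine ⟨fun a ⟨b, _, hab, hby⟩ => hab.le.trans hby.le, fun u hu => ?_⟩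
    refine (hB.isLUB_wayBelow y).2 fun b ⟨hb, hby⟩ => ?_
    exact (hB.isLUB_wayBelow b).2 fun a ⟨_, hab⟩ => hu ⟨b, hb, hab, hby⟩
  obtain ⟨a, ⟨b, hb, hab, hby⟩, hxa⟩ := h D hne hdir y hlub le_rfl
  exact ⟨b, hb, hab.mono hxa le_rfl, hby⟩

theorem of_forall_wayBelow_exists {C : Set Y} (hB : IsBasis B)
    (hC : ∀ x y : Y, WayBelow x y → ∃ c ∈ C, x ≤ c ∧ WayBelow c y) : IsBasis C := by
  intro y
  refine ⟨{c ∈ C | WayBelow c y}, Set.sep_subset C _, ?_, ?_, fun c hc => hc.2,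
    fun c hc => hc.2.le, ?_⟩
  · obtain ⟨b, -, hby⟩ := hB.nonempty_wayBelow y
    obtain ⟨c, hc, -, hcy⟩ := hC b y hby
    exact ⟨c, hc, hcy⟩
  · rintro c₁ ⟨-, h₁⟩ c₂ ⟨-, h₂⟩
    obtain ⟨b, -, hb₁, hb₂, hby⟩ := hB.exists_ge_ge_wayBelow h₁ h₂
    obtain ⟨c, hc, hbc, hcy⟩ := hC b y hby
    exact ⟨c, ⟨hc, hcy⟩, hb₁.trans hbc, hb₂.trans hbc⟩
  · refine fun u hu => (hB.isLUB_wayBelow y).2 fun b ⟨_, hby⟩ => ?_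
    obtain ⟨c, hc, hbc, hcy⟩ := hC b y hby
    exact hbc.trans (hu ⟨hc, hcy⟩)

theorem exists_mem_compactElements_between (hB : IsBasis B) (hwf : B.WellFoundedOn (· < ·))
    (h : WayBelow x y) : ∃ k ∈ compactElements Y, x ≤ k ∧ WayBelow k y := by
  obtain ⟨c, hc, hxc, hcy⟩ := hB.exists_wayBelow_wayBelow h
  obtain ⟨⟨b, hb⟩, ⟨hxb, hby⟩, hmin⟩ :=
    WellFounded.has_min hwf {b : B | WayBelow x b ∧ WayBelow (b : Y) y} ⟨⟨c, hc⟩, hxc, hcy⟩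
  obtain ⟨a, ha, hxa, hab⟩ := hB.exists_wayBelow_wayBelow hxb
  have hab_not_lt : ¬a < b := hmin ⟨a, ha⟩ ⟨hxa, hab.trans_le_s4 hby.le⟩
  obtain rfl : a = b := hab.le.eq_of_not_lt hab_not_lt
  exact ⟨a, hab, hxa.le, hby⟩

theorem isBasis_compactElements (hB : IsBasis B) (hwf : B.WellFoundedOn (· < ·)) :
    IsBasis (compactElements Y) :=
  hB.of_forall_wayBelow_exists fun _ _ => hB.exists_mem_compactElements_between hwf

theorem compactElements_subset (hB : IsBasis B) : compactElements Y ⊆ B := by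
  intro k hk
  obtain ⟨b, hb, hkb, -, hbk⟩ := hB.exists_ge_ge_wayBelow hk hk
  exact hkb.antisymm hbk.le ▸ hb

theorem isIdealOn_compactsBelow (hK : IsBasis (compactElements Y)) (y : Y) :
    IsIdealOn (compactElements Y) (compactsBelow y) := by
  refine ⟨fun x hx => hx.1, ?_, fun x hx z hz hxz => ⟨hx, hxz.trans hz.2⟩, ?_⟩
  · exact compactsBelow_eq_setOf_wayBelow y ▸ hK.nonempty_wayBelow y
  · exact compactsBelow_eq_setOf_wayBelow y ▸ hK.directedOn_wayBelow y

theorem isLUB_compactsBelow (hK : IsBasis (compactElements Y)) (y : Y) :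
    IsLUB (compactsBelow y) y :=
  compactsBelow_eq_setOf_wayBelow y ▸ hK.isLUB_wayBelow y

theorem le_iff_compactsBelow_subset (hK : IsBasis (compactElements Y)) {y y' : Y} :
    y ≤ y' ↔ compactsBelow y ⊆ compactsBelow y' :=
  ⟨fun h _ hx => ⟨hx.1, hx.2.trans h⟩,
    fun h => (hK.isLUB_compactsBelow y).mono (hK.isLUB_compactsBelow y') h⟩

end IsBasis

/-- Let `Y` be a continuous dcpo having a basis `B` that is well-founded under the order of
`Y`.  Then `Y` is algebraic: its set `K` of compact elements (`y` with `y ≪ y`) is a basis,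
and `y ↦ {x ∈ K | x ≤ y}` is an order isomorphism of `Y` onto the ideal completion `Idl(K)`
(ideals of `K` ordered by inclusion).  Moreover, if `B` is well quasi-ordered then so is `K`. -/
theorem stmt4 {Y : Type*} [PartialOrder Y] (hdcpo : IsDcpo Y)
    (B : Set Y) (hB : IsBasis B) (hwf : B.WellFoundedOn (· < ·)) :
    IsBasis {y : Y | WayBelow y y} ∧
    (∀ y : Y, IsIdealOn {y : Y | WayBelow y y} {x : Y | WayBelow x x ∧ x ≤ y}) ∧
    (∀ y y' : Y, y ≤ y' ↔
      {x : Y | WayBelow x x ∧ x ≤ y} ⊆ {x : Y | WayBelow x x ∧ x ≤ y'}) ∧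
    (∀ S : Set Y, IsIdealOn {y : Y | WayBelow y y} S →
      ∃ y : Y, {x : Y | WayBelow x x ∧ x ≤ y} = S) ∧
    (WqoOn B → WqoOn {y : Y | WayBelow y y}) := by
  have hK : IsBasis (compactElements Y) := hB.isBasis_compactElements hwf
  refine ⟨hK, hK.isIdealOn_compactsBelow, fun _ _ => hK.le_iff_compactsBelow_subset, ?_,
    fun hwqo => hwqo.subset hB.compactElements_subset⟩
  intro S hS
  have ⟨_, hne, _, hdir⟩ := hS
  obtain ⟨y, hy⟩ := hdcpo S hne hdir
  exact ⟨y, hS.compactsBelow_eq_of_isLUB hy⟩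
end

section
/- Let Σ be a finite alphabet and order Σ* by the divisibility (subsequence) ordering. The irreducible closed subsets of Σ* with the Alexandroff topology of this ordering (equivalently, the ideals of Σ*) are exactly the denotations of products. -/
/-- Atomic expressions over a finite alphabet `σ`: `a?` (denoting `{ε, a}`) and `A*`
(denoting all words over `A`), for `A` a (nonempty) set of letters. -/
inductive SAtom (σ : Type*) where
  | opt (a : σ)
  | star (A : Finset σ)

/-- Denotation of an atomic expression. -/
def SAtom.den {σ : Type*} : SAtom σ → Set (List σ)
  | .opt a => {[], [a]}
  | .star A => {w | ∀ x ∈ w, x ∈ A}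

/-- Denotation of a product `e₁e₂…eₙ`: the concatenation of the denotations. -/
def prodDen {σ : Type*} : List (SAtom σ) → Set (List σ)
  | [] => {[]}
  | e :: P => {w | ∃ u ∈ e.den, ∃ v ∈ prodDen P, w = u ++ v}

/-- Well-formedness of a product: every starred set of letters is nonempty. -/
def ValidProd {σ : Type*} (P : List (SAtom σ)) : Prop :=
  ∀ e ∈ P, ∀ A : Finset σ, e = .star A → A.Nonempty

/-- `S` is an ideal of `Σ*` for the divisibility (subsequence) ordering: nonempty,
downward closed and directed for `List.Sublist`. -/
def IsSublistIdeal {σ : Type*} (S : Set (List σ)) : Prop :=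
  S.Nonempty ∧ (∀ u v : List σ, u.Sublist v → v ∈ S → u ∈ S) ∧
    ∀ u ∈ S, ∀ v ∈ S, ∃ w ∈ S, u.Sublist w ∧ v.Sublist w

/-!
A directed set contained in a finite union of downward closed sets is contained in one of them.
Let `S` be an ideal with finitely many letters and let `A` be the set of letters `a` with `aS ⊆ S`.
Cutting a word of `S` at its first letter `b` outside `A` shows that `S` is covered by `A*` and the
finitely many sets `A* b? (b⁻¹S)`, all of which are ideals contained in `S`; hence `S` is one of
them. Since `b ∉ A`, the ideal `b⁻¹S` is strictly smaller than `S`, and by Higman's lemma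
the inclusion ordering of downward closed sets of words is well-founded, so induction applies.
-/

theorem wellFoundedOn_ssubset_of_partiallyWellOrderedOn {α : Type*} {r : α → α → Prop} {s : Set α}
    (hs : s.PartiallyWellOrderedOn r) :
    {D : Set α | D ⊆ s ∧ ∀ u v, r u v → v ∈ D → u ∈ D}.WellFoundedOn (· ⊂ ·) := by
  rw [Set.wellFoundedOn_iff_no_descending_seq]
  intro f hf
  have hanti : StrictAnti f := fun m n hmn => f.map_rel_iff.2 hmn
  choose x hx hx' using fun n : ℕ => Set.exists_of_ssubset (hanti n.lt_succ_self)
  obtain ⟨m, n, hmn, hr⟩ := hs fun n => ⟨x n, (hf n).1 (hx n)⟩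
  exact hx' m ((hf (m + 1)).2 _ _ hr (hanti.antitone (Nat.succ_le_of_lt hmn) (hx n)))

section Ideals

variable {σ : Type*} {S T : Set (List σ)} {a b : σ}

/-- The set `A*` of words over a set `A` of letters; unlike in `SAtom.star`, `A` may be infinite. -/
def wordsOver (A : Set σ) : Set (List σ) :=
  {w | ∀ a ∈ w, a ∈ A}

theorem sublistForall₂_eq_eq_sublist : List.SublistForall₂ (α := σ) Eq = List.Sublist := by
  ext u v
  simp [List.sublistForall₂_iff, List.forall₂_eq_eq_eq]

theorem partiallyWellOrderedOn_wordsOver {A : Set σ} (hA : A.Finite) :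
    (wordsOver A).PartiallyWellOrderedOn List.Sublist :=
  sublistForall₂_eq_eq_sublist (σ := σ) ▸
    Set.PartiallyWellOrderedOn.partiallyWellOrderedOn_sublistForall₂ Eq hA.partiallyWellOrderedOn

theorem exists_eq_append_cons_of_notMem_wordsOver {A : Set σ} {w : List σ}
    (hw : w ∉ wordsOver A) : ∃ u ∈ wordsOver A, ∃ b ∉ A, ∃ v, w = u ++ b :: v := by
  classical
  obtain ⟨a, ha, haA⟩ : ∃ a ∈ w, a ∉ A := by simpa [wordsOver] using hw
  obtain ⟨b, hb⟩ : ∃ b, w.find? (· ∉ A) = some b :=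
    Option.isSome_iff_exists.1 (List.find?_isSome.2 ⟨a, ha, by simpa using haA⟩)
  obtain ⟨hbA, u, v, rfl, hu⟩ := List.find?_eq_some_iff_append.1 hb
  exact ⟨u, fun x hx => by simpa using hu x hx, b, by simpa using hbA, v, rfl⟩

theorem IsSublistIdeal.mem_of_sublist (hS : IsSublistIdeal S) {u v : List σ} (huv : u.Sublist v)
    (hv : v ∈ S) : u ∈ S :=
  hS.2.1 u v huv hv

theorem IsSublistIdeal.nil_mem (hS : IsSublistIdeal S) : [] ∈ S :=
  hS.1.elim fun w hw => hS.mem_of_sublist w.nil_sublist hw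

theorem IsSublistIdeal.subset_wordsOver (hS : IsSublistIdeal S) : S ⊆ wordsOver {a | [a] ∈ S} :=
  fun _ hw _ ha => hS.mem_of_sublist (List.singleton_sublist.2 ha) hw

theorem IsSublistIdeal.image2_append (hS : IsSublistIdeal S) (hT : IsSublistIdeal T) :
    IsSublistIdeal (Set.image2 (· ++ ·) S T) := by
  refine ⟨hS.1.image2 hT.1, ?_, ?_⟩
  · rintro u _ hu ⟨v, hv, w, hw, rfl⟩
    obtain ⟨p, q, rfl, hpv, hqw⟩ := List.sublist_append_iff.1 hu
    exact Set.mem_image2_of_mem (hS.mem_of_sublist hpv hv) (hT.mem_of_sublist hqw hw)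
  · rintro _ ⟨u, hu, u', hu', rfl⟩ _ ⟨v, hv, v', hv', rfl⟩
    obtain ⟨w, hw, huw, hvw⟩ := hS.2.2 u hu v hv
    obtain ⟨w', hw', huw', hvw'⟩ := hT.2.2 u' hu' v' hv'
    exact ⟨w ++ w', Set.mem_image2_of_mem hw hw', huw.append huw', hvw.append hvw'⟩

theorem IsSublistIdeal.exists_subset_of_subset_sUnion (hS : IsSublistIdeal S)
    {𝓕 : Set (Set (List σ))} (hfin : 𝓕.Finite)
    (hlower : ∀ F ∈ 𝓕, ∀ u v : List σ, u.Sublist v → v ∈ F → u ∈ F) (hcover : S ⊆ ⋃₀ 𝓕) :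
    ∃ F ∈ 𝓕, S ⊆ F := by
  by_contra! hnot
  choose x hxS hxF using fun F : 𝓕 => Set.not_subset.1 (hnot F F.2)
  have : Finite 𝓕 := hfin
  have : Nonempty S := hS.1.to_subtype
  have hdir : DirectedOn List.Sublist S := hS.2.2
  obtain ⟨z, hz⟩ := hdir.directed_val.finite_le fun F : 𝓕 => (⟨x F, hxS F⟩ : S)
  obtain ⟨F, hF, hzF⟩ := hcover z.2
  exact hxF ⟨F, hF⟩ (hlower F hF _ _ (hz ⟨F, hF⟩) hzF)

theorem isSublistIdeal_setOf_sublist (w : List σ) : IsSublistIdeal {u | u.Sublist w} :=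
  ⟨⟨w, .refl w⟩, fun _ _ huv hv => huv.trans hv, fun _ hu _ hv => ⟨w, .refl w, hu, hv⟩⟩

theorem isSublistIdeal_wordsOver (A : Set σ) : IsSublistIdeal (wordsOver A) := by
  refine ⟨⟨[], by simp [wordsOver]⟩, fun u v huv hv a ha => hv a (huv.subset ha),
    fun u hu v hv => ⟨u ++ v, ?_, List.sublist_append_left u v, List.sublist_append_right u v⟩⟩
  exact fun a ha => (List.mem_append.1 ha).elim (hu a) (hv a)

theorem SAtom.den_opt (a : σ) : (SAtom.opt a).den = {u | u.Sublist [a]} := by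
  ext u
  exact List.sublist_singleton.symm

theorem SAtom.den_star (A : Finset σ) : (SAtom.star A).den = wordsOver ↑A :=
  rfl

theorem SAtom.isSublistIdeal_den : ∀ e : SAtom σ, IsSublistIdeal e.den
  | .opt a => SAtom.den_opt a ▸ isSublistIdeal_setOf_sublist [a]
  | .star A => SAtom.den_star A ▸ isSublistIdeal_wordsOver (A : Set σ)

theorem SAtom.finite_setOf_singleton_mem_den : ∀ e : SAtom σ, {a | [a] ∈ e.den}.Finite
  | .opt b => by simp [SAtom.den]
  | .star A => by simp [SAtom.den]

theorem prodDen_cons (e : SAtom σ) (P : List (SAtom σ)) :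
    prodDen (e :: P) = Set.image2 (· ++ ·) e.den (prodDen P) := by
  simp only [prodDen, Set.image2, eq_comm]

theorem isSublistIdeal_prodDen (P : List (SAtom σ)) : IsSublistIdeal (prodDen P) := by
  induction P with
  | nil => simpa [prodDen] using isSublistIdeal_setOf_sublist ([] : List σ)
  | cons e P ih => exact prodDen_cons e P ▸ e.isSublistIdeal_den.image2_append ih

theorem finite_setOf_singleton_mem_prodDen (P : List (SAtom σ)) :
    {a | [a] ∈ prodDen P}.Finite := by
  induction P with
  | nil => simp [prodDen]
  | cons e P ih =>
    refine (e.finite_setOf_singleton_mem_den.union ih).subset ?_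
    rintro a ⟨u, hu, v, hv, huv⟩
    rcases List.singleton_eq_append_iff.1 huv with ⟨rfl, rfl⟩ | ⟨rfl, rfl⟩
    · exact .inr hv
    · exact .inl hu

theorem exists_validProd_prodDen_eq (P : List (SAtom σ)) :
    ∃ Q, ValidProd Q ∧ prodDen Q = prodDen P := by
  induction P with
  | nil => exact ⟨[], by simp [ValidProd], rfl⟩
  | cons e P ih =>
    obtain ⟨Q, hQ, hQP⟩ := ih
    by_cases he : e = .star ∅
    · refine ⟨Q, hQ, ?_⟩
      have hden : e.den = {[]} := by
        simp [he, SAtom.den, ← List.eq_nil_iff_forall_not_mem]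
      simp [prodDen_cons, hden, hQP]
    · refine ⟨e :: Q, List.forall_mem_cons.2 ⟨?_, hQ⟩, by rw [prodDen_cons, prodDen_cons, hQP]⟩
      rintro A rfl
      exact Finset.nonempty_iff_ne_empty.2 fun hA => he (hA ▸ rfl)

/-- The left residual `a⁻¹S` of a set of words by a letter. -/
def leftResidual (S : Set (List σ)) (a : σ) : Set (List σ) :=
  {w | a :: w ∈ S}

theorem cons_sublist_append_cons_iff {s t w : List σ} (ha : a ∉ s) :
    (a :: w).Sublist (s ++ a :: t) ↔ w.Sublist t := by
  induction s with
  | nil => exact List.cons_sublist_cons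
  | cons c s ih =>
    obtain ⟨hac, has⟩ := not_or.1 (mt List.mem_cons.2 ha)
    rw [List.cons_append, List.cons_sublist_cons', ih has]
    simp [hac]

theorem isSublistIdeal_leftResidual (hS : IsSublistIdeal S) (ha : [a] ∈ S) :
    IsSublistIdeal (leftResidual S a) := by
  refine ⟨⟨[], ha⟩, fun u v huv hv => hS.mem_of_sublist (huv.cons_cons a) hv, ?_⟩
  intro u hu v hv
  obtain ⟨z, hz, huz, hvz⟩ := hS.2.2 _ hu _ hv
  -- The part of `z` after the first `a` is the largest word `t` with `a :: t` below `z`.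
  obtain ⟨s, t, rfl, has⟩ := List.eq_append_cons_of_mem (huz.subset List.mem_cons_self)
  exact ⟨t, hS.mem_of_sublist (List.sublist_append_right s _) hz,
    (cons_sublist_append_cons_iff has).1 huz, (cons_sublist_append_cons_iff has).1 hvz⟩

/-- The set of letters `a` with `aS ⊆ S`, the candidate for the leading factor `A*` of a
product denoting `S`. -/
def freeLetters (S : Set (List σ)) : Set σ :=
  {a | ∀ w ∈ S, a :: w ∈ S}

theorem append_mem_of_mem_wordsOver_freeLetters {u w : List σ}
    (hu : u ∈ wordsOver (freeLetters S)) (hw : w ∈ S) : u ++ w ∈ S := by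
  induction u with
  | nil => exact hw
  | cons a u ih =>
    obtain ⟨ha, hu⟩ := List.forall_mem_cons.1 hu
    exact ha _ (ih hu)

theorem IsSublistIdeal.wordsOver_freeLetters_subset (hS : IsSublistIdeal S) :
    wordsOver (freeLetters S) ⊆ S :=
  fun u hu => u.append_nil ▸ append_mem_of_mem_wordsOver_freeLetters hu hS.nil_mem

theorem IsSublistIdeal.leftResidual_ssubset (hS : IsSublistIdeal S) (hb : b ∉ freeLetters S) :
    leftResidual S b ⊂ S :=
  ⟨fun w hw => hS.mem_of_sublist (List.sublist_cons_self b w) hw, hb⟩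

/-- The set `A* b? (b⁻¹S)`, where `A` is the set of free letters of `S`. An ideal `S` is covered by
`A*` and its branches at the letters `b` outside `A`. -/
def branch (S : Set (List σ)) (b : σ) : Set (List σ) :=
  Set.image2 (· ++ ·) (wordsOver (freeLetters S))
    (Set.image2 (· ++ ·) (SAtom.opt b).den (leftResidual S b))

theorem isSublistIdeal_branch (hS : IsSublistIdeal S) (hb : [b] ∈ S) :
    IsSublistIdeal (branch S b) :=
  (isSublistIdeal_wordsOver _).image2_append
    ((SAtom.isSublistIdeal_den _).image2_append (isSublistIdeal_leftResidual hS hb))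

theorem IsSublistIdeal.branch_subset (hS : IsSublistIdeal S) : branch S b ⊆ S := by
  rintro _ ⟨u, hu, _, ⟨v, hv, w, hw, rfl⟩, rfl⟩
  refine append_mem_of_mem_wordsOver_freeLetters hu (hS.mem_of_sublist ?_ hw)
  rw [SAtom.den_opt] at hv
  exact hv.append (.refl w)

theorem IsSublistIdeal.mem_wordsOver_or_mem_branch (hS : IsSublistIdeal S) {w : List σ}
    (hw : w ∈ S) :
    w ∈ wordsOver (freeLetters S) ∨ ∃ b, [b] ∈ S ∧ b ∉ freeLetters S ∧ w ∈ branch S b := by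
  refine or_iff_not_imp_left.2 fun hwA => ?_
  obtain ⟨u, hu, b, hb, v, rfl⟩ := exists_eq_append_cons_of_notMem_wordsOver hwA
  have hbv : b :: v ∈ S := hS.mem_of_sublist (List.sublist_append_right u _) hw
  exact ⟨b, hS.subset_wordsOver hw b (by simp), hb,
    u, hu, b :: v, ⟨[b], .inr rfl, v, hbv, rfl⟩, rfl⟩

theorem IsSublistIdeal.eq_wordsOver_or_eq_branch (hS : IsSublistIdeal S)
    (hfin : {a | [a] ∈ S}.Finite) :
    S = wordsOver (freeLetters S) ∨
      ∃ b, [b] ∈ S ∧ b ∉ freeLetters S ∧ S = branch S b := by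
  let B : Set σ := {b | [b] ∈ S ∧ b ∉ freeLetters S}
  let 𝓕 : Set (Set (List σ)) := insert (wordsOver (freeLetters S)) (branch S '' B)
  have hB : B.Finite := hfin.subset fun b hb => hb.1
  have hlower : ∀ F ∈ 𝓕, ∀ u v : List σ, u.Sublist v → v ∈ F → u ∈ F := by
    rintro F (rfl | ⟨b, hb, rfl⟩)
    · exact (isSublistIdeal_wordsOver _).2.1
    · exact (isSublistIdeal_branch hS hb.1).2.1
  have hcover : S ⊆ ⋃₀ 𝓕 := fun w hw => by
    rcases hS.mem_wordsOver_or_mem_branch hw with hwA | ⟨b, hbS, hbA, hwb⟩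
    · exact ⟨_, .inl rfl, hwA⟩
    · exact ⟨_, .inr ⟨b, ⟨hbS, hbA⟩, rfl⟩, hwb⟩
  obtain ⟨F, rfl | ⟨b, hb, rfl⟩, hSF⟩ :=
    hS.exists_subset_of_subset_sUnion ((hB.image _).insert _) hlower hcover
  · exact .inl (hSF.antisymm hS.wordsOver_freeLetters_subset)
  · exact .inr ⟨b, hb.1, hb.2, hSF.antisymm hS.branch_subset⟩

theorem IsSublistIdeal.exists_prodDen_eq (hS : IsSublistIdeal S) (hfin : {a | [a] ∈ S}.Finite) :
    ∃ P : List (SAtom σ), prodDen P = S := by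
  have hwf := wellFoundedOn_ssubset_of_partiallyWellOrderedOn
    (partiallyWellOrderedOn_wordsOver hfin)
  refine hwf.induction (P := fun D => IsSublistIdeal D → ∃ P : List (SAtom σ), prodDen P = D)
    ⟨hS.subset_wordsOver, hS.2.1⟩ ?_ hS
  rintro D ⟨hDS, -⟩ ih hD
  have hDfin : {a | [a] ∈ D}.Finite := hfin.subset fun a ha => hDS ha a List.mem_cons_self
  have hA : (freeLetters D).Finite := hDfin.subset fun a ha => ha [] hD.nil_mem
  have hden : (SAtom.star hA.toFinset).den = wordsOver (freeLetters D) := by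
    rw [SAtom.den_star, hA.coe_toFinset]
  rcases hD.eq_wordsOver_or_eq_branch hDfin with hDA | ⟨b, hbD, hbA, hDb⟩
  · exact ⟨[.star hA.toFinset], by simp [prodDen, hden, ← hDA]⟩
  · have hlt := hD.leftResidual_ssubset hbA
    have hres := isSublistIdeal_leftResidual hD hbD
    obtain ⟨P, hP⟩ := ih _ ⟨hlt.subset.trans hDS, hres.2.1⟩ hlt hres
    exact ⟨.star hA.toFinset :: .opt b :: P, by
      rw [prodDen_cons, prodDen_cons, hP, hden, ← branch, ← hDb]⟩

end Ideals

theorem stmt5_general {σ : Type*} (S : Set (List σ)) :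
    IsSublistIdeal S ∧ {a | [a] ∈ S}.Finite ↔
      ∃ P : List (SAtom σ), ValidProd P ∧ S = prodDen P := by
  constructor
  · rintro ⟨hS, hfin⟩
    obtain ⟨P, rfl⟩ := hS.exists_prodDen_eq hfin
    obtain ⟨Q, hQ, hQP⟩ := exists_validProd_prodDen_eq P
    exact ⟨Q, hQ, hQP.symm⟩
  · rintro ⟨P, -, rfl⟩
    exact ⟨isSublistIdeal_prodDen P, finite_setOf_singleton_mem_prodDen P⟩

/-- For a finite alphabet `σ`, the ideals of `σ*` under the divisibility (subsequence)
ordering — equivalently, the irreducible closed subsets of `σ*` in the Alexandroff topology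
of that ordering — are exactly the denotations of products. -/
theorem stmt5 {σ : Type*} [Fintype σ] (S : Set (List σ)) :
    IsSublistIdeal S ↔ ∃ P : List (SAtom σ), ValidProd P ∧ S = prodDen P := by
  rw [← stmt5_general, and_iff_left (Set.toFinite _)]
end

section
/- Let (X,≤) be a quasi-ordered set. On the set X* of finite words over X, the subword topology induced by the Alexandroff topology of (X,≤) coincides with the Alexandroff topology of the embedding quasi-ordering ≤* (i.e., the subword-open sets are exactly the ≤*-upward-closed sets). -/
/-- Word embedding along a relation `r`: `a₁…a_m` embeds into `w₀a′₁w₁…w_{m−1}a′_m w_m`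
whenever `r aᵢ a′ᵢ` for all `i`.  (`WordEmb (· ≤ ·)` is the embedding quasi-ordering `≤*`;
`WordEmb (fun U x => x ∈ U) [U₁,…,Uₙ] w` says `w ∈ X*U₁X*U₂X*…X*UₙX*`.) -/
inductive WordEmb {α β : Type*} (r : α → β → Prop) : List α → List β → Prop where
  | nil (l : List β) : WordEmb r [] l
  | cons {a : α} {b : β} {l₁ : List α} {l₂ : List β} :
      r a b → WordEmb r l₁ l₂ → WordEmb r (a :: l₁) (b :: l₂)
  | skip {b : β} {l₁ : List α} {l₂ : List β} :
      WordEmb r l₁ l₂ → WordEmb r l₁ (b :: l₂)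

/-- The subword topology on `X*` induced by the Alexandroff topology of `(X, ≤)`: generated
by the sets `X*U₁X*U₂X*…X*UₙX*` with `U₁,…,Uₙ` open (i.e. upward closed) in `X`. -/
def subwordTopOfOrder (X : Type*) [Preorder X] : TopologicalSpace (List X) :=
  TopologicalSpace.generateFrom
    {S | ∃ Us : List (Set X), (∀ U ∈ Us, IsUpperSet U) ∧
      S = {w | WordEmb (fun (U : Set X) (x : X) => x ∈ U) Us w}}

/-!
Every generator `X*U₁X*…X*UₙX*` with the `Uᵢ` upward closed is upward closed for `≤*`, since
embeddings compose. Conversely, the words above `a₁…aₙ` for `≤*` form the generator with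
`Uᵢ = Set.Ici aᵢ`, and every upward closed set is a union of such principal sets.
-/

theorem generateFrom_eq_upperSet {α : Type*} [Preorder α] {g : Set (Set α)}
    (hg : ∀ s ∈ g, IsUpperSet s) (hIci : ∀ a, Set.Ici a ∈ g) :
    TopologicalSpace.generateFrom g = Topology.upperSet α := by
  refine le_antisymm (fun s (hs : IsUpperSet s) ↦ ?_) (le_generateFrom hg)
  let := TopologicalSpace.generateFrom g
  rw [← hs.upperClosure, coe_upperClosure]
  exact isOpen_biUnion fun a _ ↦ TopologicalSpace.isOpen_generateFrom_of_mem (hIci a)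

section WordEmbedding

variable {α β γ : Type*} {r s : α → β → Prop} {l₁ : List α} {l₂ : List β}

theorem wordEmb_iff_sublistForall₂ : WordEmb r l₁ l₂ ↔ List.SublistForall₂ r l₁ l₂ := by
  constructor <;> intro h
  · induction h with
    | nil => exact .nil
    | cons hab _ ih => exact .cons hab ih
    | skip _ ih => exact .cons_right ih
  · induction h with
    | nil => exact .nil _
    | cons hab _ ih => exact .cons hab ih
    | cons_right _ ih => exact .skip ih

namespace WordEmb

theorem map_left_iff {f : γ → α} {l : List γ} :
    WordEmb r (l.map f) l₂ ↔ WordEmb (fun c b ↦ r (f c) b) l l₂ := by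
  simp only [wordEmb_iff_sublistForall₂, List.sublistForall₂_map_left_iff]

protected theorem refl {r : α → α → Prop} [Std.Refl r] (l : List α) : WordEmb r l l :=
  wordEmb_iff_sublistForall₂.2 (List.Sublist.refl l).sublistForall₂

theorem imp_of_mem (himp : ∀ a ∈ l₁, ∀ b, r a b → s a b) (h : WordEmb r l₁ l₂) :
    WordEmb s l₁ l₂ := by
  induction h with
  | nil l => exact .nil l
  | cons hab _ ih =>
    rw [List.forall_mem_cons] at himp
    exact .cons (himp.1 _ hab) (ih himp.2)
  | skip _ ih => exact .skip (ih himp)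

theorem comp {t : β → γ → Prop} {l₃ : List γ} (h₁₂ : WordEmb r l₁ l₂) (h₂₃ : WordEmb t l₂ l₃) :
    WordEmb (Relation.Comp r t) l₁ l₃ := by
  induction h₂₃ generalizing l₁ with
  | nil =>
    cases h₁₂
    exact .nil _
  | cons hbc _ ih =>
    cases h₁₂ with
    | nil => exact .nil _
    | cons hab h₁₂ => exact .cons ⟨_, hab, hbc⟩ (ih h₁₂)
    | skip h₁₂ => exact .skip (ih h₁₂)
  | skip _ ih => exact .skip (ih h₁₂)

protected theorem trans {r : α → α → Prop} [IsTrans α r] {l₁ l₂ l₃ : List α}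
    (h₁₂ : WordEmb r l₁ l₂) (h₂₃ : WordEmb r l₂ l₃) : WordEmb r l₁ l₃ :=
  (h₁₂.comp h₂₃).imp_of_mem fun _ _ _ ⟨_, hab, hbc⟩ ↦ _root_.trans hab hbc

end WordEmb

end WordEmbedding

section Subword

variable {X : Type*}

/-- The set of words `X*U₁X*U₂X*…X*UₙX*`, for `Us = [U₁, …, Uₙ]`. These sets generate the subword
topology when the `Uᵢ` range over the open sets of `X`. -/
def subwordSet (Us : List (Set X)) : Set (List X) :=
  {w | WordEmb (fun U x ↦ x ∈ U) Us w}

variable [Preorder X]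

variable (X) in
/-- The embedding quasi-ordering `≤*` on words over a quasi-ordered set. It is not an instance, and
gives `lt` explicitly, because `<` on lists is lexicographic in Mathlib. -/
abbrev wordEmbPreorder : Preorder (List X) where
  le := WordEmb (· ≤ ·)
  lt w w' := WordEmb (· ≤ ·) w w' ∧ ¬WordEmb (· ≤ ·) w' w
  le_refl := .refl
  le_trans _ _ _ := .trans

theorem isUpperSet_subwordSet {Us : List (Set X)} (hUs : ∀ U ∈ Us, IsUpperSet U) :
    @IsUpperSet _ (wordEmbPreorder X).toLE (subwordSet Us) :=
  fun _ _ hle hmem ↦ (hmem.comp hle).imp_of_mem fun U hU _ ⟨_, ha, hab⟩ ↦ hUs U hU hab ha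

theorem subwordSet_map_Ici (w : List X) :
    subwordSet (w.map Set.Ici) = @Set.Ici _ (wordEmbPreorder X) w :=
  Set.ext fun _ ↦ WordEmb.map_left_iff

variable (X) in
theorem subwordTopOfOrder_eq_upperSet :
    subwordTopOfOrder X = @Topology.upperSet (List X) (wordEmbPreorder X) := by
  refine @generateFrom_eq_upperSet _ (wordEmbPreorder X) _ ?_ fun w ↦ ?_
  · rintro _ ⟨Us, hUs, rfl⟩
    exact isUpperSet_subwordSet hUs
  · refine ⟨w.map Set.Ici, ?_, (subwordSet_map_Ici w).symm⟩
    exact List.forall_mem_map.2 fun a _ ↦ isUpperSet_Ici a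

end Subword

/-- For a quasi-ordered set `(X, ≤)`, the subword topology on `X*` induced by the Alexandroff
topology of `X` coincides with the Alexandroff topology of the embedding quasi-ordering `≤*`:
a set of words is subword-open iff it is upward closed for `≤*`. -/
theorem stmt14 {X : Type*} [Preorder X] (S : Set (List X)) :
    @IsOpen _ (subwordTopOfOrder X) S ↔
    ∀ w w' : List X, WordEmb (· ≤ ·) w w' → w ∈ S → w' ∈ S := by
  rw [subwordTopOfOrder_eq_upperSet]
  rfl
end

section
/- If X is a Noetherian topological space, then the set X^⊛ of finite multisets over X equipped with the sub-multiset topology is Noetherian. -/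
/-- The basic set `X^⊛ ⊙ U₁ ⊙ U₂ ⊙ … ⊙ Uₙ`: the multisets containing a sub-multiset whose
elements match `U₁,…,Uₙ` bijectively. -/
def msBasic {X : Type*} (Us : List (Set X)) : Set (Multiset X) :=
  {m | ∃ t ≤ m, Multiset.Rel (fun (U : Set X) (x : X) => x ∈ U) ↑Us t}

/-- The sub-multiset topology on `X^⊛` for a topological space `X`: the smallest topology
containing the sets `X^⊛ ⊙ U₁ ⊙ … ⊙ Uₙ` with `U₁,…,Uₙ` open in `X`. -/
def submultisetTop (X : Type*) [TopologicalSpace X] : TopologicalSpace (Multiset X) :=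
  TopologicalSpace.generateFrom
    {S | ∃ Us : List (Set X), (∀ U ∈ Us, IsOpen U) ∧ S = msBasic Us}

/-!
A space with subbasis `B` is Noetherian as soon as every sequence of points `xₙ ∈ B iₙ` has some
`xₙ ∈ B iₘ` with `m < n` (Alexander's subbasis theorem), and the open sets of a Noetherian space
have this property. It says that the relation "`y ∈ B i`" between pointed sets `(i, x)` and
`(j, y)` is a well-quasi-order, except that it is not transitive. Higman's lemma survives without
transitivity: Ramsey's theorem replaces the extraction of monotone subsequences in the minimal bad
sequence argument. Applied to lists of pointed open sets of `X`, it gives the property for the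
basic sets of `X^⊛`.
-/

open Set Set.PartiallyWellOrderedOn TopologicalSpace

section Ramsey

theorem exists_subseq_of_eventually_eventually {F : Filter ℕ} [F.NeBot] (hF : F ≤ Filter.atTop)
    {p : ℕ → ℕ → Prop} (hp : ∀ᶠ i in F, ∀ᶠ j in F, p i j) :
    ∃ g : ℕ ↪o ℕ, ∀ m n, m < n → p (g m) (g n) := by
  have extend (s : Finset ℕ) (hs : ∀ i ∈ s, ∀ᶠ j in F, p i j) :
      ∃ n, (∀ᶠ j in F, p n j) ∧ ∀ i ∈ s, i < n ∧ p i n := by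
    have hlt : ∀ᶠ n in F, ∀ i ∈ s, i < n :=
      s.eventually_all.2 fun i _ => hF (Filter.eventually_gt_atTop i)
    obtain ⟨n, hn, hsn, hpn⟩ := (hp.and (hlt.and (s.eventually_all.2 hs))).exists
    exact ⟨n, hn, fun i hi => ⟨hsn i hi, hpn i hi⟩⟩
  obtain ⟨g, -, hg⟩ := exists_seq_of_forall_finset_exists _ (fun i n => i < n ∧ p i n) extend
  exact ⟨.ofStrictMono g fun m n hmn => (hg m n hmn).1, fun m n hmn => (hg m n hmn).2⟩

theorem exists_homogeneous_subseq (p : ℕ → ℕ → Prop) :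
    ∃ g : ℕ ↪o ℕ, (∀ m n, m < n → p (g m) (g n)) ∨ ∀ m n, m < n → ¬p (g m) (g n) := by
  have hF := Nat.hyperfilter_le_atTop
  by_cases hp : ∀ᶠ i in Filter.hyperfilter ℕ, ∀ᶠ j in Filter.hyperfilter ℕ, p i j
  · exact (exists_subseq_of_eventually_eventually hF hp).imp fun _ => Or.inl
  · simp only [← Ultrafilter.eventually_not] at hp
    exact (exists_subseq_of_eventually_eventually hF hp).imp fun _ => Or.inr

theorem exists_subseq_of_wellQuasiOrdered {α : Type*} {r : α → α → Prop}
    (hr : WellQuasiOrdered r) (f : ℕ → α) :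
    ∃ g : ℕ ↪o ℕ, ∀ m n, m < n → r (f (g m)) (f (g n)) := by
  obtain ⟨g, hg | hg⟩ := exists_homogeneous_subseq fun m n => r (f m) (f n)
  · exact ⟨g, hg⟩
  · obtain ⟨m, n, hmn, hfmn⟩ := hr (f ∘ g)
    exact absurd hfmn (hg m n hmn)

end Ramsey

section Higman

variable {α : Type*} {r : α → α → Prop}

theorem exists_lt_of_isMinBadSeq {rk : α → ℕ} {s : Set α} {f c : ℕ → α} (hf : IsBadSeq r s f)
    (hmin : ∀ n, IsMinBadSeq r rk s n f) (hcs : ∀ n, c n ∈ s) (hrk : ∀ n, rk (c n) < rk (f n))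
    (hcf : ∀ a n, r a (c n) → r a (f n)) (g : ℕ ↪o ℕ) :
    ∃ m n, m < n ∧ r (c (g m)) (c (g n)) := by
  by_contra! hbad
  -- The bad sequence `f 0, …, f (g 0 - 1), c (g 0), c (g 1), …` contradicts minimality at `g 0`.
  refine hmin (g 0) (fun n => if n < g 0 then f n else c (g (n - g 0)))
    (fun m hm => (if_pos hm).symm) (by simpa using hrk (g 0)) ⟨fun n => ?_, fun m n hmn => ?_⟩
  all_goals dsimp only
  · split_ifs
    exacts [hf.1 n, hcs _]
  · split_ifs with hm hn hn
    · exact hf.2 m n hmn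
    · have hmg : m < g (n - g 0) := hm.trans_le (g.monotone (Nat.zero_le _))
      exact fun h => hf.2 m _ hmg (hcf _ _ h)
    · omega
    · exact hbad _ _ (by omega)

theorem wellQuasiOrdered_sublistForall₂ (hr : WellQuasiOrdered r) :
    WellQuasiOrdered (List.SublistForall₂ r) := by
  rw [← partiallyWellOrderedOn_univ_iff, iff_not_exists_isMinBadSeq List.length]
  rintro ⟨f, hf, hmin⟩
  have hne (n : ℕ) : ∃ a l, f n = a :: l :=
    List.exists_cons_of_ne_nil fun h => hf.2 n (n + 1) n.lt_succ_self (h ▸ .nil)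
  choose head tail hcons using hne
  obtain ⟨g, hhead⟩ := exists_subseq_of_wellQuasiOrdered hr head
  obtain ⟨m, n, hmn, htail⟩ := exists_lt_of_isMinBadSeq hf hmin (fun n => mem_univ (tail n))
    (by simp [hcons]) (fun l n h => hcons n ▸ h.cons_right) g
  apply hf.2 (g m) (g n) (g.strictMono hmn)
  rw [hcons, hcons]
  exact .cons (hhead m n hmn) htail

end Higman

section Captures

variable {ι X : Type*} {B : ι → Set X}

/-- The relation "the first set contains the second point" between pointed members `(i, x)`,
`x ∈ B i`, of a family of sets. When it is `WellQuasiOrdered`, `B` behaves like a family of open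
sets of a Noetherian space. It is neither symmetric nor transitive in general. -/
def Captures (B : ι → Set X) (p q : Σ i, B i) : Prop :=
  (q.2 : X) ∈ B p.1

theorem wellQuasiOrdered_captures_of_isOpen [TopologicalSpace X] [NoetherianSpace X]
    (hB : ∀ i, IsOpen (B i)) : WellQuasiOrdered (Captures B) := by
  intro p
  obtain ⟨t, ht⟩ := (NoetherianSpace.isCompact (⋃ n, B (p n).1)).elim_finite_subcover
    (fun n => B (p n).1) (fun n => hB _) subset_rfl
  obtain ⟨N, hN⟩ := t.exists_nat_subset_range
  obtain ⟨m, hm, hmN⟩ := mem_iUnion₂.1 (ht (mem_iUnion.2 ⟨N, (p N).2.2⟩))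
  exact ⟨m, N, Finset.mem_range.1 (hN hm), hmN⟩

theorem exists_finite_subcover_of_wellQuasiOrdered_captures (h : WellQuasiOrdered (Captures B))
    {I : Set ι} {K : Set X} (hK : K ⊆ ⋃ i ∈ I, B i) :
    ∃ J ⊆ I, J.Finite ∧ K ⊆ ⋃ i ∈ J, B i := by
  by_contra! hcon
  have extend (s : Finset (Σ i, B i)) (hs : ∀ p ∈ s, p.1 ∈ I) :
      ∃ q : Σ i, B i, q.1 ∈ I ∧ ∀ p ∈ s, ¬Captures B p q := by
    obtain ⟨x, hxK, hx⟩ := not_subset.1 <|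
      hcon (Sigma.fst '' (s : Set (Σ i, B i))) (image_subset_iff.2 hs) (s.finite_toSet.image _)
    obtain ⟨i, hi, hxi⟩ := mem_iUnion₂.1 (hK hxK)
    exact ⟨⟨i, x, hxi⟩, hi, fun p hp hpx =>
      hx (mem_biUnion (mem_image_of_mem _ (Finset.mem_coe.2 hp)) hpx)⟩
  obtain ⟨p, -, hp⟩ := exists_seq_of_forall_finset_exists _ _ extend
  obtain ⟨m, n, hmn, hcap⟩ := h p
  exact hp m n hmn hcap

theorem noetherianSpace_of_wellQuasiOrdered_captures [t : TopologicalSpace X]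
    (ht : t = generateFrom (range B)) (h : WellQuasiOrdered (Captures B)) :
    NoetherianSpace X := by
  refine noetherianSpace_iff_isCompact.2 fun K => isCompact_generateFrom ht fun P hP hKP => ?_
  obtain ⟨I, rfl⟩ := subset_range_iff_exists_image_eq.1 hP
  rw [sUnion_image] at hKP
  obtain ⟨J, hJI, hJ, hKJ⟩ := exists_finite_subcover_of_wellQuasiOrdered_captures h hKP
  exact ⟨B '' J, image_mono hJI, hJ.image B, by rwa [sUnion_image]⟩

theorem exists_map_fst_eq_map_snd_eq_of_forall₂ {is : List ι} {xs : List X}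
    (h : List.Forall₂ (fun i x => x ∈ B i) is xs) :
    ∃ l : List (Σ i, B i), l.map Sigma.fst = is ∧ l.map (fun p => (p.2 : X)) = xs := by
  induction h with
  | nil => exact ⟨[], rfl, rfl⟩
  | @cons i x _ _ hx _ ih =>
    obtain ⟨l, rfl, rfl⟩ := ih
    exact ⟨⟨i, x, hx⟩ :: l, rfl, rfl⟩

end Captures

section Multiset

variable {X : Type*}

theorem multiset_rel_coe_left_iff {α β : Type*} {r : α → β → Prop} {l : List α} {t : Multiset β} :
    Multiset.Rel r l t ↔ ∃ l' : List β, List.Forall₂ r l l' ∧ ↑l' = t := by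
  induction l generalizing t with
  | nil => simp [eq_comm]
  | cons a l ih =>
    simp only [← Multiset.cons_coe, Multiset.rel_cons_left, ih, List.forall₂_cons_left_iff]
    constructor
    · rintro ⟨b, _, hab, ⟨l', hl', rfl⟩, rfl⟩
      exact ⟨b :: l', ⟨b, l', hab, hl', rfl⟩, rfl⟩
    · rintro ⟨_, ⟨b, l', hab, hl', rfl⟩, rfl⟩
      exact ⟨b, l', hab, ⟨l', hl', rfl⟩, rfl⟩

theorem mem_msBasic_iff {Us : List (Set X)} {m : Multiset X} :
    m ∈ msBasic Us ↔ ∃ xs : List X, List.Forall₂ (fun U x => x ∈ U) Us xs ∧ ↑xs ≤ m := by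
  simp only [msBasic, mem_ofPred_eq, multiset_rel_coe_left_iff]
  constructor
  · rintro ⟨_, hm, xs, hxs, rfl⟩
    exact ⟨xs, hxs, hm⟩
  · rintro ⟨xs, hxs, hm⟩
    exact ⟨xs, hm, xs, hxs, rfl⟩

theorem mem_msBasic_of_sublistForall₂ {Us : List (Set X)} {xs : List X} {m : Multiset X}
    (h : List.SublistForall₂ (fun U x => x ∈ U) Us xs) (hm : ↑xs ≤ m) : m ∈ msBasic Us := by
  obtain ⟨ys, hys, hsub⟩ := List.sublistForall₂_iff.1 h
  exact mem_msBasic_iff.2 ⟨ys, hys, (Multiset.coe_le.2 hsub.subperm).trans hm⟩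

theorem wellQuasiOrdered_captures_msBasic {ι : Type*} {B : ι → Set X}
    (h : WellQuasiOrdered (Captures B)) :
    WellQuasiOrdered (Captures fun is : List ι => msBasic (is.map B)) := by
  intro p
  have hlift (n : ℕ) : ∃ l : List (Σ i, B i),
      l.map Sigma.fst = (p n).1 ∧ ↑(l.map fun q => (q.2 : X)) ≤ (p n).2.1 := by
    obtain ⟨xs, hxs, hle⟩ := mem_msBasic_iff.1 (p n).2.2
    obtain ⟨l, hfst, rfl⟩ :=
      exists_map_fst_eq_map_snd_eq_of_forall₂ (List.forall₂_map_left_iff.1 hxs)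
    exact ⟨l, hfst, hle⟩
  choose l hfst hle using hlift
  obtain ⟨m, n, hmn, hl⟩ := wellQuasiOrdered_sublistForall₂ h l
  refine ⟨m, n, hmn, mem_msBasic_of_sublistForall₂ ?_ (hle n)⟩
  rw [← hfst m]
  simpa only [List.sublistForall₂_map_left_iff, List.sublistForall₂_map_right_iff] using! hl

theorem submultisetTop_eq_generateFrom_range [TopologicalSpace X] :
    submultisetTop X =
      generateFrom (range fun Us : List (Opens X) => msBasic (Us.map (↑))) := by
  unfold submultisetTop
  congr 1
  ext S
  constructor
  · rintro ⟨Us, hUs, rfl⟩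
    lift Us to List (Opens X) using hUs
    exact ⟨Us, rfl⟩
  · rintro ⟨Us, rfl⟩
    exact ⟨Us.map (↑), by simp [Opens.isOpen], rfl⟩

end Multiset

/-- If `X` is a Noetherian topological space, then `X^⊛` with the sub-multiset topology is
Noetherian. -/
theorem stmt17 {X : Type*} [TopologicalSpace X] [TopologicalSpace.NoetherianSpace X] :
    @TopologicalSpace.NoetherianSpace (Multiset X) (submultisetTop X) := by
  let := submultisetTop X
  have hX : WellQuasiOrdered (Captures ((↑) : Opens X → Set X)) :=
    wellQuasiOrdered_captures_of_isOpen Opens.isOpen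
  exact noetherianSpace_of_wellQuasiOrdered_captures submultisetTop_eq_generateFrom_range
    (wellQuasiOrdered_captures_msBasic hX)
end

section
/- If X is a Noetherian topological space, then the powerset P(X) equipped with the lower Vietoris topology is Noetherian. -/
/-- The lower Vietoris topology on the powerset `P(X)`: the smallest topology containing the
sets `◇U = {A ⊆ X | A ∩ U ≠ ∅}` for `U` open in `X`. -/
def lowerVietoris (X : Type*) [TopologicalSpace X] : TopologicalSpace (Set X) :=
  TopologicalSpace.generateFrom
    {T | ∃ U : Set X, IsOpen U ∧ T = {A : Set X | (A ∩ U).Nonempty}}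

/-!
The map `U ↦ ◇U` commutes with arbitrary unions. In a Noetherian space a union of open sets is
already the union of finitely many of them, so the same is true of the sets `◇U`. By Alexander's
subbasis theorem it is enough to know this for a subbasis.
-/

open Set TopologicalSpace

theorem exists_finite_subset_sUnion_eq {X : Type*} [TopologicalSpace X] [NoetherianSpace X]
    {P : Set (Set X)} (hP : ∀ U ∈ P, IsOpen U) : ∃ Q ⊆ P, Q.Finite ∧ ⋃₀ Q = ⋃₀ P := by
  have hcompact : IsCompact (⋃₀ P) := NoetherianSpace.isCompact _
  obtain ⟨Q, hQP, hQ, hcover⟩ :=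
    hcompact.elim_finite_subcover_image (c := id) hP sUnion_eq_biUnion.subset
  exact ⟨Q, hQP, hQ, (sUnion_mono hQP).antisymm (hcover.trans sUnion_eq_biUnion.superset)⟩

theorem noetherianSpace_generateFrom {X : Type*} {S : Set (Set X)}
    (h : ∀ P ⊆ S, ∃ Q ⊆ P, Q.Finite ∧ ⋃₀ Q = ⋃₀ P) :
    @NoetherianSpace X (generateFrom S) := by
  let := generateFrom S
  refine noetherianSpace_iff_isCompact.2 fun s => isCompact_generateFrom rfl fun P hPS hsP => ?_
  obtain ⟨Q, hQP, hQ, hQ_eq⟩ := h P hPS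
  exact ⟨Q, hQP, hQ, hsP.trans hQ_eq.superset⟩

theorem noetherianSpace_generateFrom_image {X Y : Type*} [TopologicalSpace X] [NoetherianSpace X]
    {f : Set X → Set Y} (hf : ∀ P : Set (Set X), f (⋃₀ P) = ⋃₀ (f '' P)) :
    @NoetherianSpace Y (generateFrom (f '' {U | IsOpen U})) := by
  refine noetherianSpace_generateFrom fun R hR => ?_
  obtain ⟨P, hP, rfl⟩ := subset_image_iff.1 hR
  obtain ⟨Q, hQP, hQ, hQ_eq⟩ := exists_finite_subset_sUnion_eq hP
  exact ⟨f '' Q, image_mono hQP, hQ.image f, by rw [← hf, ← hf, hQ_eq]⟩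

/-- The set `◇U` of all `A ⊆ X` that meet `U`; for open `U` these sets form the defining subbasis of
the lower Vietoris topology. -/
def diamond {X : Type*} (U : Set X) : Set (Set X) :=
  {A | (A ∩ U).Nonempty}

theorem diamond_sUnion {X : Type*} (P : Set (Set X)) : diamond (⋃₀ P) = ⋃₀ (diamond '' P) := by
  ext A
  simp only [diamond, sUnion_eq_biUnion, biUnion_image, inter_iUnion₂, nonempty_iUnion, mem_iUnion,
    mem_ofPred_eq]

theorem lowerVietoris_eq_generateFrom_image (X : Type*) [TopologicalSpace X] :
    lowerVietoris X = generateFrom (diamond '' {U | IsOpen U}) := by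
  simp only [lowerVietoris, diamond, image, mem_ofPred_eq, eq_comm]

/-- If `X` is a Noetherian topological space, then the powerset `P(X)` with the lower
Vietoris topology is Noetherian. -/
theorem stmt18 {X : Type*} [TopologicalSpace X] [TopologicalSpace.NoetherianSpace X] :
    @TopologicalSpace.NoetherianSpace (Set X) (lowerVietoris X) := by
  rw [lowerVietoris_eq_generateFrom_image]
  exact noetherianSpace_generateFrom_image diamond_sUnion
end
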